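/- Let a, b ∈ ℝ with a > 0, let ω = [[0, a], [-a, 0]], B = [[0, b], [-b, 0]], and let φ be the permutation matrix on ℝ⁴ swapping coordinates 2 and 4. Then φ⁻¹ ∘ (exp(-B) ∘ 𝒥_ω ∘ exp(B)) ∘ φ = [[-J', 0], [0, J'ᵀ]], where J' = [[b/a, -1/a], [a + b²/a, -b/a]]. -/

import Mathlib

open Matrix

theorem stmt_8 (a b : ℝ) (ha : 0 < a) :
    let ω : Matrix (Fin 2) (Fin 2) ℝ := !![0, a; -a, 0]
    let ωinv : Matrix (Fin 2) (Fin 2) ℝ := !![0, -1/a; 1/a, 0]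
    let B : Matrix (Fin 2) (Fin 2) ℝ := !![0, b; -b, 0]
    let J' : Matrix (Fin 2) (Fin 2) ℝ := !![b/a, -1/a; a + b^2/a, -b/a]
    let 𝒥ω : Matrix (Fin 4) (Fin 4) ℝ :=
      !![0, 0, -ωinv 0 0, -ωinv 0 1;
         0, 0, -ωinv 1 0, -ωinv 1 1;
         ω 0 0, ω 0 1, 0, 0;
         ω 1 0, ω 1 1, 0, 0]
    let expB : Matrix (Fin 4) (Fin 4) ℝ :=
      !![1, 0, 0, 0; 0, 1, 0, 0; B 0 0, B 0 1, 1, 0; B 1 0, B 1 1, 0, 1]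
    let expmB : Matrix (Fin 4) (Fin 4) ℝ :=
      !![1, 0, 0, 0; 0, 1, 0, 0; -B 0 0, -B 0 1, 1, 0; -B 1 0, -B 1 1, 0, 1]
    let φ : Matrix (Fin 4) (Fin 4) ℝ := !![1,0,0,0; 0,0,0,1; 0,0,1,0; 0,1,0,0]
    φ⁻¹ * (expmB * 𝒥ω * expB) * φ =
      !![-J' 0 0, -J' 0 1, 0, 0;
         -J' 1 0, -J' 1 1, 0, 0;
         0, 0, J'ᵀ 0 0, J'ᵀ 0 1;
         0, 0, J'ᵀ 1 0, J'ᵀ 1 1] := by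
  intro ω ωinv B J' 𝒥ω expB expmB φ
  have hφ : φ⁻¹ = φ := by
    apply Matrix.inv_eq_right_inv
    ext i j
    fin_cases i <;> fin_cases j <;> simp [φ, Matrix.mul_apply, Fin.sum_univ_four]
  have ha' : a ≠ 0 := ha.ne'
  rw [hφ]
  ext i j
  fin_cases i <;> fin_cases j <;>
    simp [φ, expmB, expB, 𝒥ω, J', B, ω, ωinv, Matrix.mul_apply, Fin.sum_univ_four] <;>
    field_simp <;> ring
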